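/- Let occ(σ) be the number of occurrences in σ of the mesh pattern Nr. 63, where an occurrence is a pair of indices i < j with σ_i < σ_j = b such that: every element before position i has value greater than b; every element strictly between positions i and j has value less than b; and every element after position j has value greater than b. Let E(t,u) = Σ_{n≥0} t^n Σ_{σ∈K_n} u^{occ(σ)}. Then (u − t(1−u+ut) + (1−u)·A(t))·E(t,u) = (2−u−ut^2)·A(t) − (1−u)(1+t) as formal power series in t over ℚ[u]. In particular, at u = 0 the generating function P(t) for king permutations avoiding this pattern satisfies (A(t) − t)·P(t) = 2·A(t) − t − 1. -/

import Mathlib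

/-- A permutation of `{0, …, n-1}` is a *king permutation* if consecutive entries
differ by more than 1 in absolute value. -/
def IsKing {n : ℕ} (σ : Equiv.Perm (Fin n)) : Prop :=
  ∀ i : Fin n, ∀ h : (i : ℕ) + 1 < n,
    1 < |((σ ⟨(i : ℕ) + 1, h⟩ : ℕ) : ℤ) - ((σ i : ℕ) : ℤ)|

/-- `kingCount n = A_n`, the number of king permutations of length `n`. -/
noncomputable def kingCount (n : ℕ) : ℕ :=
  Nat.card {σ : Equiv.Perm (Fin n) // IsKing σ}

/-- `A(t)` regarded as a power series over `ℚ[u]` (constant-polynomial coefficients). -/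
noncomputable def kingAu : PowerSeries (Polynomial ℚ) :=
  PowerSeries.mk fun n => (kingCount n : Polynomial ℚ)

/-- `u` viewed as a constant power series over `ℚ[u]`. -/
noncomputable def U : PowerSeries (Polynomial ℚ) :=
  PowerSeries.C (R := Polynomial ℚ) Polynomial.X

/-- `t`, the power series variable. -/
noncomputable def T : PowerSeries (Polynomial ℚ) :=
  PowerSeries.X

/-- An occurrence of the mesh pattern Nr. 63 in `σ`. -/
def OccP {n : ℕ} (σ : Equiv.Perm (Fin n)) (i j : Fin n) : Prop :=
  i < j ∧ σ i < σ j ∧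
    (∀ k : Fin n, k < i → σ j < σ k) ∧
    (∀ k : Fin n, i < k → k < j → σ k < σ j) ∧
    (∀ k : Fin n, j < k → σ j < σ k)

/-- The number of occurrences of the mesh pattern Nr. 63 in `σ`. -/
noncomputable def occP {n : ℕ} (σ : Equiv.Perm (Fin n)) : ℕ :=
  Nat.card {p : Fin n × Fin n // OccP σ p.1 p.2}

-- `E(t,u) = Σ_{n≥0} t^n Σ_{σ∈K_n} u^{occ(σ)}`, a power series in `t` over `ℚ[u]`.
open Classical in
noncomputable def Etu : PowerSeries (Polynomial ℚ) :=
  PowerSeries.mk fun n =>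
    ∑ σ : Equiv.Perm (Fin n),
      if IsKing σ then (Polynomial.X : Polynomial ℚ) ^ occP σ else 0

/-- `A(t) = Σ_{n≥0} A_n t^n` as a formal power series over `ℚ`. -/
noncomputable def kingA : PowerSeries ℚ :=
  PowerSeries.mk fun n => (kingCount n : ℚ)

/-- The generating function for king permutations avoiding the pattern. -/
noncomputable def Pav : PowerSeries ℚ :=
  PowerSeries.mk fun n =>
    (Nat.card {σ : Equiv.Perm (Fin n) // IsKing σ ∧ occP σ = 0} : ℚ)

/-!
An occurrence is determined by its value `b`: the letters `≤ b` of the king permutation occupy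
consecutive positions and end in `b`. If `c` is the smallest such value, the letters `≤ c` form a
factor `τ c` in which `τ` is a king permutation avoiding the pattern, and any avoider `τ` of length
`c ≥ 2` can arise: it does not end in `c - 1`, which would be an occurrence. Contracting the factor
to the letter `0` leaves a permutation with one occurrence fewer that satisfies the adjacency rule
of king permutations, except that `1` may directly precede `0`. Contracting `1 0` in such a
permutation allows `0` directly before `1` instead, and contracting `0 1` leads back. With `K`,
`K₁₀`, `K₀₁` the generating functions for the three adjacency rules and `P` that of the avoiders,
`K = P + u (P - 1 - t) (K₁₀ - 1)`, `K₁₀ = K + t (K₀₁ - 1)`, `K₀₁ = K + u t (K₁₀ - 1)`.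
Putting `u = 1` expresses `P` through `A`, and then `K` is found from the same equations.
-/

namespace KingWord

/-- `b` is the value `σ_j` of an occurrence of the mesh pattern in the permutation word `l`: the
letters `≤ b` occupy consecutive positions, the last of them being `b`. As `0 < b`, there are other
such letters, and the first of them is `σ_i`. -/
def IsOcc (l : List ℕ) (b : ℕ) : Prop :=
  0 < b ∧ l.filter (· ≤ b) <:+: l ∧ [b] <:+ l.filter (· ≤ b)

instance (l : List ℕ) : DecidablePred (IsOcc l) :=
  fun _ => inferInstanceAs (Decidable (_ ∧ _))

/-- The number of occurrences of the mesh pattern in a permutation word, counted by their value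
`σ_j`. -/
def occ (l : List ℕ) : ℕ := Nat.count (IsOcc l) l.length

section Inflation

/-- The word that replaces a letter in `inflate`. -/
def letterBlock (τ : List ℕ) : ℕ → List ℕ
  | 0 => τ
  | x + 1 => [τ.length + x]

/-- The word obtained from `ρ` by replacing the letter `0` by the word `τ`, a permutation of
`{0, …, τ.length - 1}` in all uses, and moving the other letters up to make room. -/
def inflate (τ ρ : List ℕ) : List ℕ := ρ.flatMap (letterBlock τ)

/-- The word obtained from `σ` by contracting the letters below `m` to the single letter `0`, put
where `m - 1` stands; a left inverse of inflation by words of length `m`. -/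
def deflate (m : ℕ) (σ : List ℕ) : List ℕ := (σ.filter (m ≤ · + 1)).map (· + 1 - m)

variable {m k b x : ℕ} {τ ρ σ l l' : List ℕ}

lemma mem_of_perm_range (h : l.Perm (List.range m)) : x ∈ l ↔ x < m := by
  rw [h.mem_iff, List.mem_range]

lemma length_of_perm_range (h : l.Perm (List.range m)) : l.length = m := by
  simpa using h.length_eq

lemma deflate_append (m : ℕ) (l l' : List ℕ) :
    deflate m (l ++ l') = deflate m l ++ deflate m l' := by
  simp only [deflate, List.filter_append, List.map_append]

lemma deflate_eq_singleton_zero (hm : 0 < m) (hτ : τ.Perm (List.range m)) :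
    deflate m τ = [0] := by
  obtain ⟨c, rfl⟩ := Nat.exists_eq_add_one.2 hm
  refine List.perm_singleton.1 (((hτ.filter _).map _).trans (.of_eq ?_))
  have hlt : (List.range c).filter (c + 1 ≤ · + 1) = [] := by simp
  rw [List.range_succ, List.filter_append, hlt]
  simp

lemma deflate_inflate (hm : 0 < m) (hτ : τ.Perm (List.range m)) (ρ : List ℕ) :
    deflate m (inflate τ ρ) = ρ := by
  have hletter : ∀ x, deflate m (letterBlock τ x) = [x]
    | 0 => deflate_eq_singleton_zero hm hτ
    | x + 1 => by simp [deflate, letterBlock, length_of_perm_range hτ, Nat.add_assoc]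
  induction ρ with
  | nil => rfl
  | cons x ρ ih =>
    rw [inflate, List.flatMap_cons, deflate_append, hletter]
    exact congrArg (x :: ·) ih

lemma inflate_deflate (hτ : τ.length = m) (hl : ∀ x ∈ l, m ≤ x) :
    inflate τ (deflate m l) = l := by
  have hfilter : l.filter (m ≤ · + 1) = l :=
    List.filter_eq_self.2 fun x hx => decide_eq_true (Nat.le_succ_of_le (hl x hx))
  have hblock : ∀ x ∈ l, letterBlock τ (x + 1 - m) = [x] := fun x hx => by
    obtain ⟨y, rfl⟩ := Nat.exists_eq_add_of_le (hl x hx)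
    rw [Nat.add_assoc, Nat.add_sub_cancel_left, letterBlock, hτ]
  rw [inflate, deflate, hfilter, List.flatMap_map, List.flatMap_congr hblock,
    List.flatMap_singleton']

lemma inflate_range (τ : List ℕ) (k : ℕ) :
    inflate τ (List.range (k + 1)) = τ ++ (List.range k).map (τ.length + ·) := by
  rw [List.range_succ_eq_map, inflate, List.flatMap_cons, List.flatMap_map]
  simp only [letterBlock, ← List.map_eq_flatMap]

lemma inflate_perm_range_iff (hm : 0 < m) (hτ : τ.Perm (List.range m)) :
    (inflate τ ρ).Perm (List.range (m + k)) ↔ ρ.Perm (List.range (k + 1)) := by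
  have hrange : (inflate τ (List.range (k + 1))).Perm (List.range (m + k)) := by
    rw [inflate_range, length_of_perm_range hτ, List.range_add]
    exact hτ.append_right _
  constructor
  · intro h
    have := ((h.trans hrange.symm).filter (m ≤ · + 1)).map (· + 1 - m)
    rwa [← deflate, ← deflate, deflate_inflate hm hτ, deflate_inflate hm hτ] at this
  · exact fun h => (h.flatMap_right _).trans hrange

lemma le_of_disjoint (hτ : τ.Perm (List.range m)) (h : l.Disjoint τ) : ∀ x ∈ l, m ≤ x :=
  fun _ hx => not_lt.1 fun hlt => h hx ((mem_of_perm_range hτ).2 hlt)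

lemma exists_append_of_infix (hσ : σ.Nodup) (hτ : τ.Perm (List.range m)) (h : τ <:+: σ) :
    ∃ A C, A ++ τ ++ C = σ ∧ (∀ x ∈ A, m ≤ x) ∧ ∀ x ∈ C, m ≤ x := by
  obtain ⟨A, C, rfl⟩ := h
  refine ⟨A, C, rfl, le_of_disjoint hτ ?_, le_of_disjoint hτ ?_⟩
  · exact (List.nodup_append'.1 (List.nodup_append'.1 hσ).1).2.2
  · exact (List.disjoint_append_left.1 (List.nodup_append'.1 hσ).2.2).2.symm

lemma exists_inflate_eq (hm : 0 < m) (hσ : σ.Nodup) (hτ : τ.Perm (List.range m))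
    (h : τ <:+: σ) : ∃ ρ, inflate τ ρ = σ := by
  obtain ⟨A, C, rfl, hA, hC⟩ := exists_append_of_infix hσ hτ h
  have hlen := length_of_perm_range hτ
  refine ⟨deflate m (A ++ τ ++ C), ?_⟩
  rw [deflate_append, deflate_append, deflate_eq_singleton_zero hm hτ, inflate,
    List.flatMap_append, List.flatMap_append, List.flatMap_singleton, ← inflate, ← inflate,
    inflate_deflate hlen hA, inflate_deflate hlen hC, letterBlock]

lemma filter_lt_eq_of_infix (hσ : σ.Nodup) (hτ : τ.Perm (List.range m)) (h : τ <:+: σ) :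
    σ.filter (· < m) = τ := by
  obtain ⟨A, C, rfl, hA, hC⟩ := exists_append_of_infix hσ hτ h
  have hlow : τ.filter (· < m) = τ :=
    List.filter_eq_self.2 fun x hx => decide_eq_true ((mem_of_perm_range hτ).1 hx)
  have hhigh : ∀ l : List ℕ, (∀ x ∈ l, m ≤ x) → l.filter (· < m) = [] := fun l hl =>
    List.filter_eq_nil_iff.2 fun x hx => by simpa using hl x hx
  rw [List.filter_append, List.filter_append, hlow, hhigh A hA, hhigh C hC,
    List.nil_append, List.append_nil]

lemma isOcc_iff_of_infix (hσ : σ.Nodup) (hτ : τ.Perm (List.range m)) (h : τ <:+: σ)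
    (hb : b < m) : IsOcc σ b ↔ IsOcc τ b := by
  have hfilter : (σ.filter (· ≤ b)).filter (· < m) = σ.filter (· ≤ b) :=
    List.filter_eq_self.2 fun x hx => by
      simpa using (of_decide_eq_true (List.mem_filter.1 hx).2).trans_lt hb
  have hsub : τ.filter (· ≤ b) = σ.filter (· ≤ b) := by
    conv_lhs => rw [← filter_lt_eq_of_infix hσ hτ h]
    rw [List.filter_comm, hfilter]
  rw [IsOcc, IsOcc, hsub]
  refine and_congr_right' (and_congr_left' ⟨fun hinf => ?_, fun hinf => hinf.trans h⟩)
  rw [← hfilter]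
  conv_rhs => rw [← filter_lt_eq_of_infix hσ hτ h]
  exact hinf.filter _

lemma infix_inflate (h0 : 0 ∈ ρ) : τ <:+: inflate τ ρ := by
  obtain ⟨A, C, rfl⟩ := List.append_of_mem h0
  exact ⟨inflate τ A, inflate τ C, by simp [inflate, letterBlock]⟩

lemma inflate_infix_inflate_iff (hm : 0 < m) (hτ : τ.Perm (List.range m)) :
    inflate τ l <:+: inflate τ l' ↔ l <:+: l' := by
  refine ⟨fun h => ?_, fun h => h.flatMap _⟩
  rw [← deflate_inflate hm hτ l, ← deflate_inflate hm hτ l']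
  exact (h.filter _).map _

lemma inflate_suffix_inflate_iff (hm : 0 < m) (hτ : τ.Perm (List.range m)) :
    inflate τ l <:+ inflate τ l' ↔ l <:+ l' := by
  refine ⟨fun h => ?_, fun h => h.flatMap _⟩
  rw [← deflate_inflate hm hτ l, ← deflate_inflate hm hτ l']
  exact (h.filter _).map _

lemma filter_le_inflate (hτ : τ.Perm (List.range m)) (ρ : List ℕ) (x : ℕ) :
    (inflate τ ρ).filter (· ≤ m + x) = inflate τ (ρ.filter (· ≤ x + 1)) := by
  have hτx : τ.filter (· ≤ m + x) = τ := List.filter_eq_self.2 fun y hy =>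
    decide_eq_true (((mem_of_perm_range hτ).1 hy).le.trans (Nat.le_add_right m x))
  have hletter : ∀ y, (letterBlock τ y).filter (· ≤ m + x) =
      if y ≤ x + 1 then letterBlock τ y else []
    | 0 => by simp [letterBlock, hτx]
    | y + 1 => by simp [letterBlock, length_of_perm_range hτ, List.filter_singleton]
  induction ρ with
  | nil => rfl
  | cons y ρ ih =>
    rw [inflate, List.flatMap_cons, List.filter_append, hletter, ← inflate, ih, List.filter_cons]
    by_cases hy : y ≤ x + 1 <;> simp [hy, inflate]

lemma isOcc_inflate_add_iff (hm : 0 < m) (hτ : τ.Perm (List.range m)) :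
    IsOcc (inflate τ ρ) (m + x) ↔ IsOcc ρ (x + 1) := by
  have hsingle : [m + x] = inflate τ [x + 1] := by
    simp [inflate, letterBlock, length_of_perm_range hτ]
  rw [IsOcc, IsOcc, filter_le_inflate hτ, inflate_infix_inflate_iff hm hτ, hsingle,
    inflate_suffix_inflate_iff hm hτ]
  simp only [Nat.add_pos_left hm, Nat.succ_pos]

lemma count_congr {p q : ℕ → Prop} [DecidablePred p] [DecidablePred q] {n : ℕ}
    (h : ∀ k < n, p k ↔ q k) : Nat.count p n = Nat.count q n :=
  le_antisymm (Nat.count_mono_left fun k hk => (h k hk).1)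
    (Nat.count_mono_left fun k hk => (h k hk).2)

lemma not_isOcc_zero (l : List ℕ) : ¬IsOcc l 0 := fun h => h.1.false

lemma occ_inflate (hm : 0 < m) (hτ : τ.Perm (List.range m)) (hρ : ρ.Perm (List.range (k + 1))) :
    occ (inflate τ ρ) = occ τ + occ ρ := by
  have hσ := (inflate_perm_range_iff hm hτ).2 hρ
  have hinf : τ <:+: inflate τ ρ := infix_inflate ((mem_of_perm_range hρ).2 k.succ_pos)
  rw [occ, occ, occ, length_of_perm_range hσ, length_of_perm_range hτ, length_of_perm_range hρ,
    Nat.count_add, Nat.count_succ', if_neg (not_isOcc_zero ρ), Nat.add_zero]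
  congr 1
  · exact count_congr fun b hb =>
      isOcc_iff_of_infix (hσ.nodup_iff.2 List.nodup_range) hτ hinf hb
  · exact count_congr fun x _ => isOcc_inflate_add_iff hm hτ

lemma isChain_congr_of_nodup {R S : ℕ → ℕ → Prop} (hl : l.Nodup)
    (h : ∀ x y, x ≠ y → (R x y ↔ S x y)) : l.IsChain R ↔ l.IsChain S := by
  simp only [List.isChain_iff_getElem]
  exact forall₂_congr fun i hi => h _ _ (by simp [hl.getElem_inj_iff])

/-- The relation on the letters of `ρ` induced by `Q` on the letters of `inflate τ ρ`: the last
letter of the block of `x` is `Q`-related to the first letter of the block of `y`. -/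
def BlockAdj (Q : ℕ → ℕ → Prop) (τ : List ℕ) (x y : ℕ) : Prop :=
  ∀ a ∈ (letterBlock τ x).getLast?, ∀ b ∈ (letterBlock τ y).head?, Q a b

lemma isChain_inflate_iff {Q Q' : ℕ → ℕ → Prop} (hτ : τ ≠ []) (hQτ : τ.IsChain Q)
    (hρ : ρ.Nodup) (hQQ' : ∀ x y, x ≠ y → (BlockAdj Q τ x y ↔ Q' x y)) :
    (inflate τ ρ).IsChain Q ↔ ρ.IsChain Q' := by
  have hne : ∀ x, letterBlock τ x ≠ []
    | 0 => hτ
    | _ + 1 => List.cons_ne_nil _ _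
  have hchain : ∀ x, (letterBlock τ x).IsChain Q
    | 0 => hQτ
    | _ + 1 => List.isChain_singleton _
  have hnil : [] ∉ ρ.map (letterBlock τ) := by simpa using fun x _ => hne x
  rw [inflate, List.flatMap_def, List.isChain_flatten hnil, List.isChain_map,
    and_iff_right (List.forall_mem_map.2 fun x _ => hchain x)]
  exact isChain_congr_of_nodup hρ hQQ'

lemma blockAdj_iff_of_forall {Q Q' : ℕ → ℕ → Prop} {a z y : ℕ} (hhead : τ.head? = some a)
    (hlast : τ.getLast? = some z) (h0s : ∀ y, Q z (τ.length + y) ↔ Q' 0 (y + 1))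
    (hs0 : ∀ x, Q (τ.length + x) a ↔ Q' (x + 1) 0)
    (hss : ∀ x y, x ≠ y → (Q (τ.length + x) (τ.length + y) ↔ Q' (x + 1) (y + 1)))
    (hxy : x ≠ y) : BlockAdj Q τ x y ↔ Q' x y := by
  rcases x with _ | x <;> rcases y with _ | y
  · exact absurd rfl hxy
  · simpa [BlockAdj, letterBlock, hlast] using h0s y
  · simpa [BlockAdj, letterBlock, hhead] using hs0 x
  · simpa [BlockAdj, letterBlock] using hss x y fun h => hxy (congrArg _ h)

end Inflation

/-- The permutations of `{0, …, n - 1}` as words. -/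
def permWords (n : ℕ) : Finset (List ℕ) := (List.range n).permutations.toFinset

lemma mem_permWords {n : ℕ} {l : List ℕ} : l ∈ permWords n ↔ l.Perm (List.range n) := by
  rw [permWords, List.mem_toFinset, List.mem_permutations]

lemma permWords_zero : permWords 0 = {[]} := by
  ext l
  simp [mem_permWords]

lemma permWords_one : permWords 1 = {[0]} := by
  ext l
  simp [mem_permWords]

section Weight

variable {R : Type*} [CommSemiring R] (u : R) (Q Q' : ℕ → ℕ → Prop) [DecidableRel Q]
  [DecidableRel Q']

/-- The weighted count of the permutation words of length `n` whose neighbouring letters are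
`Q`-related, each word `σ` having weight `u ^ occ σ`. -/
def chainWeight (n : ℕ) : R := ∑ σ ∈ permWords n with σ.IsChain Q, u ^ occ σ

lemma chainWeight_zero : chainWeight u Q 0 = 1 := by
  simp [chainWeight, permWords_zero, Finset.filter_singleton, occ]

lemma chainWeight_one : chainWeight u Q 1 = 1 := by
  simp [chainWeight, permWords_one, Finset.filter_singleton, occ, Nat.count_succ, not_isOcc_zero]

variable {Q Q'}

lemma sum_pow_occ_infix {m : ℕ} (k : ℕ) {τ : List ℕ} (hm : 0 < m) (hτ : τ.Perm (List.range m))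
    (hQτ : τ.IsChain Q) (hQQ' : ∀ x y, x ≠ y → (BlockAdj Q τ x y ↔ Q' x y)) :
    ∑ σ ∈ permWords (m + k) with σ.IsChain Q ∧ τ <:+: σ, u ^ occ σ =
      u ^ occ τ * chainWeight u Q' (k + 1) := by
  have hne : τ ≠ [] := List.ne_nil_of_length_pos (by rwa [length_of_perm_range hτ])
  rw [chainWeight, Finset.mul_sum]
  symm
  refine Finset.sum_nbij (inflate τ) ?_ ?_ ?_ ?_
  · intro ρ hρ
    rw [Finset.mem_filter, mem_permWords] at hρ ⊢
    exact ⟨(inflate_perm_range_iff hm hτ).2 hρ.1,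
      (isChain_inflate_iff hne hQτ (hρ.1.nodup_iff.2 List.nodup_range) hQQ').2 hρ.2,
      infix_inflate ((mem_of_perm_range hρ.1).2 k.succ_pos)⟩
  · exact (Function.LeftInverse.injective (deflate_inflate hm hτ)).injOn
  · intro σ hσ
    rw [Finset.mem_coe, Finset.mem_filter, mem_permWords] at hσ
    obtain ⟨hσ, hQσ, hinf⟩ := hσ
    obtain ⟨ρ, rfl⟩ := exists_inflate_eq hm (hσ.nodup_iff.2 List.nodup_range) hτ hinf
    have hρ := (inflate_perm_range_iff hm hτ).1 hσ
    refine ⟨ρ, ?_, rfl⟩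
    rw [Finset.mem_coe, Finset.mem_filter, mem_permWords]
    exact ⟨hρ, (isChain_inflate_iff hne hQτ (hρ.nodup_iff.2 List.nodup_range) hQQ').1 hQσ⟩
  · intro ρ hρ
    rw [occ_inflate hm hτ (mem_permWords.1 (Finset.mem_filter.1 hρ).1), pow_add]

/-- Two letters that may be neighbours in a king permutation. -/
def Far (x y : ℕ) : Prop := x + 1 < y ∨ y + 1 < x

instance : DecidableRel Far := fun _ _ => inferInstanceAs (Decidable (_ ∨ _))

/-- The adjacency rule of king permutations, relaxed to allow also `a` directly before `b`. -/
def FarExcept (a b x y : ℕ) : Prop := Far x y ∨ x = a ∧ y = b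

instance (a b : ℕ) : DecidableRel (FarExcept a b) := fun _ _ => inferInstanceAs (Decidable (_ ∨ _))

lemma isChain_far_iff {a b : ℕ} (hab : ¬Far a b) {l : List ℕ} :
    l.IsChain Far ↔ l.IsChain (FarExcept a b) ∧ ¬[a, b] <:+: l := by
  constructor
  · exact fun h => ⟨h.imp fun _ _ => Or.inl, fun hinf => hab (by simpa using h.infix hinf)⟩
  · rintro ⟨h, hinf⟩
    rw [List.isChain_iff_forall_rel_of_append_cons_cons] at h ⊢
    refine fun x y A C hl => (h hl).resolve_right ?_
    rintro ⟨rfl, rfl⟩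
    exact hinf ⟨A, C, by simp [hl]⟩

lemma chainWeight_farExcept {a b : ℕ} (hab : ¬Far a b) (n : ℕ) :
    chainWeight u (FarExcept a b) n = chainWeight u Far n +
      ∑ σ ∈ permWords n with σ.IsChain (FarExcept a b) ∧ [a, b] <:+: σ, u ^ occ σ := by
  simp only [chainWeight, isChain_far_iff hab, ← Finset.filter_filter]
  rw [add_comm, Finset.sum_filter_add_sum_filter_not]

lemma chainWeight_farExcept_one_zero (k : ℕ) :
    chainWeight u (FarExcept 1 0) (k + 2) =
      chainWeight u Far (k + 2) + chainWeight u (FarExcept 0 1) (k + 1) := by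
  have hocc : occ [1, 0] = 0 := by decide
  have hadj (x y : ℕ) (hxy : x ≠ y) : BlockAdj (FarExcept 1 0) [1, 0] x y ↔ FarExcept 0 1 x y := by
    refine blockAdj_iff_of_forall rfl rfl ?_ ?_ ?_ hxy <;> intros <;>
      simp only [FarExcept, Far, List.length_cons, List.length_nil] <;> grind
  rw [chainWeight_farExcept u (by decide), Nat.add_comm k 2,
    sum_pow_occ_infix u k two_pos (by decide) (by simp [FarExcept]) hadj, hocc, pow_zero, one_mul]

lemma chainWeight_farExcept_zero_one (k : ℕ) :
    chainWeight u (FarExcept 0 1) (k + 2) =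
      chainWeight u Far (k + 2) + u * chainWeight u (FarExcept 1 0) (k + 1) := by
  have hocc : occ [0, 1] = 1 := by decide
  have hadj (x y : ℕ) (hxy : x ≠ y) : BlockAdj (FarExcept 0 1) [0, 1] x y ↔ FarExcept 1 0 x y := by
    refine blockAdj_iff_of_forall rfl rfl ?_ ?_ ?_ hxy <;> intros <;>
      simp only [FarExcept, Far, List.length_cons, List.length_nil] <;> grind
  rw [chainWeight_farExcept u (by decide), Nat.add_comm k 2,
    sum_pow_occ_infix u k two_pos (by decide) (by simp [FarExcept]) hadj, hocc, pow_one]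

/-- The king permutations of length `n`, as words, that avoid the pattern. -/
def avoiders (n : ℕ) : Finset (List ℕ) := {σ ∈ permWords n | σ.IsChain Far ∧ occ σ = 0}

lemma chainWeight_zero_left (n : ℕ) : chainWeight (0 : R) Far n = (avoiders n).card := by
  simp only [chainWeight, avoiders, ← Finset.filter_filter, Finset.card_filter _ (Finset.filter ..),
    zero_pow_eq, Nat.cast_sum, Nat.cast_ite, Nat.cast_one, Nat.cast_zero]

end Weight

section LowestOccurrence

variable {b c n : ℕ} {τ σ : List ℕ}

lemma occ_eq_zero_iff : occ σ = 0 ↔ ∀ b < σ.length, ¬IsOcc σ b := Nat.count_iff_forall_not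

lemma append_singleton_perm_range (hτ : τ.Perm (List.range c)) :
    (τ ++ [c]).Perm (List.range (c + 1)) := by
  rw [List.range_succ]
  exact hτ.append_right [c]

lemma isOcc_append_singleton_iff (hτ : τ.Perm (List.range c)) (hb : b < c) :
    IsOcc (τ ++ [c]) b ↔ IsOcc τ b :=
  isOcc_iff_of_infix ((append_singleton_perm_range hτ).nodup_iff.2 List.nodup_range) hτ
    (List.prefix_append τ [c]).isInfix hb

lemma isOcc_append_singleton_self (hc : 0 < c) (hτ : τ.Perm (List.range c)) :
    IsOcc (τ ++ [c]) c := by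
  have hfilter : (τ ++ [c]).filter (· ≤ c) = τ ++ [c] := List.filter_eq_self.2 fun x hx =>
    decide_eq_true (Nat.le_of_lt_succ
      ((mem_of_perm_range (append_singleton_perm_range hτ)).1 hx))
  rw [IsOcc, hfilter]
  exact ⟨hc, List.infix_rfl, List.suffix_append τ [c]⟩

lemma occ_append_singleton (hc : 0 < c) (hτ : τ.Perm (List.range c)) :
    occ (τ ++ [c]) = occ τ + 1 := by
  rw [occ, occ, length_of_perm_range (append_singleton_perm_range hτ), length_of_perm_range hτ,
    Nat.count_succ, if_pos (isOcc_append_singleton_self hc hτ),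
    count_congr fun b hb => isOcc_append_singleton_iff hτ hb]

lemma isLeast_isOcc (hc : 0 < c) (hσ : σ.Nodup) (hτ : τ.Perm (List.range c)) (hocc : occ τ = 0)
    (h : τ ++ [c] <:+: σ) : IsLeast {b | IsOcc σ b} c := by
  have hlow : ∀ {b}, b ≤ c → (IsOcc σ b ↔ IsOcc (τ ++ [c]) b) := fun hb =>
    isOcc_iff_of_infix hσ (append_singleton_perm_range hτ) h (Nat.lt_succ_of_le hb)
  refine ⟨(hlow le_rfl).2 (isOcc_append_singleton_self hc hτ), fun b hb => ?_⟩
  by_contra! hbc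
  rw [Set.mem_ofPred_eq, hlow hbc.le, isOcc_append_singleton_iff hτ hbc] at hb
  exact occ_eq_zero_iff.1 hocc b (by rwa [length_of_perm_range hτ]) hb

lemma filter_le_perm_range (hσ : σ.Perm (List.range n)) (hc : c < n) :
    (σ.filter (· ≤ c)).Perm (List.range (c + 1)) := by
  refine (hσ.filter _).trans ((List.perm_ext_iff_of_nodup (List.nodup_range.filter _)
    List.nodup_range).2 fun x => ?_)
  simp only [List.mem_filter, List.mem_range, decide_eq_true_eq]
  omega

lemma exists_avoider_infix (hσ : σ.Perm (List.range n)) (hfar : σ.IsChain Far)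
    (hocc : occ σ ≠ 0) : ∃ c ∈ Finset.Ico 2 n, ∃ τ ∈ avoiders c, τ ++ [c] <:+: σ := by
  obtain ⟨c, ⟨hcn, hc⟩, hmin⟩ :
      ∃ c, (c < σ.length ∧ IsOcc σ c) ∧ ∀ b < c, ¬(b < σ.length ∧ IsOcc σ b) :=
    have hex := Nat.count_ne_iff_exists.1 hocc
    ⟨Nat.find hex, Nat.find_spec hex, fun _ => Nat.find_min hex⟩
  rw [length_of_perm_range hσ] at hcn
  obtain ⟨hc0, hinf, τ, hτ⟩ := hc
  have hτc := filter_le_perm_range hσ hcn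
  rw [← hτ, List.range_succ, List.perm_append_right_iff] at hτc
  rw [← hτ] at hinf
  have hτσ : τ <:+: σ := (List.prefix_append τ [c]).isInfix.trans hinf
  have hc1 : c ≠ 1 := by
    rintro rfl
    obtain rfl : τ = [0] := List.perm_singleton.1 hτc
    exact absurd (hfar.infix hinf) (by decide)
  refine ⟨c, Finset.mem_Ico.2 ⟨by omega, hcn⟩, τ, ?_, hinf⟩
  rw [avoiders, Finset.mem_filter, mem_permWords, occ_eq_zero_iff, length_of_perm_range hτc]
  refine ⟨hτc, hfar.infix hτσ, fun b hb hoccb => hmin b hb ⟨?_, ?_⟩⟩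
  · rw [length_of_perm_range hσ]
    exact hb.trans hcn
  · exact (isOcc_iff_of_infix (hσ.nodup_iff.2 List.nodup_range) hτc hτσ hb).2 hoccb

lemma isChain_far_append_singleton (hc : 2 ≤ c) (hτ : τ ∈ avoiders c) :
    (τ ++ [c]).IsChain Far := by
  rw [avoiders, Finset.mem_filter, mem_permWords] at hτ
  obtain ⟨hτ, hfar, hocc⟩ := hτ
  refine hfar.append (List.isChain_singleton c) fun x hx y hy => ?_
  obtain rfl : c = y := by simpa using hy
  obtain ⟨τ', rfl⟩ := List.getLast?_eq_some_iff.1 hx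
  have hxc : x < c := (mem_of_perm_range hτ).1 (by simp)
  refine Or.inl (lt_of_le_of_ne hxc ?_)
  rintro rfl
  rw [List.range_succ, List.perm_append_right_iff] at hτ
  rw [occ_append_singleton (by omega) hτ] at hocc
  exact Nat.succ_ne_zero _ hocc

lemma blockAdj_far_append_singleton_iff (hc : 0 < c) (hτ : τ.Perm (List.range c)) {x y : ℕ}
    (hxy : x ≠ y) : BlockAdj Far (τ ++ [c]) x y ↔ FarExcept 1 0 x y := by
  have hlen := length_of_perm_range (append_singleton_perm_range hτ)
  obtain ⟨a, τ, rfl⟩ := List.exists_cons_of_length_pos (hc.trans_eq (length_of_perm_range hτ).symm)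
  have hac : a < c := (mem_of_perm_range hτ).1 List.mem_cons_self
  refine blockAdj_iff_of_forall rfl List.getLast?_concat ?_ ?_ ?_ hxy <;> intros <;>
    simp only [FarExcept, Far, hlen] <;> grind

variable {R : Type*} [CommSemiring R] (u : R)

lemma sum_pow_occ_avoider_infix (hc : c ∈ Finset.Ico 2 n) (hτ : τ ∈ avoiders c) :
    ∑ σ ∈ permWords n with σ.IsChain Far ∧ τ ++ [c] <:+: σ, u ^ occ σ =
      u * chainWeight u (FarExcept 1 0) (n - c) := by
  rw [Finset.mem_Ico] at hc
  have hc0 : 0 < c := by omega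
  obtain ⟨k, rfl⟩ : ∃ k, n = c + 1 + k := Nat.exists_eq_add_of_le hc.2
  have hfar := isChain_far_append_singleton hc.1 hτ
  rw [avoiders, Finset.mem_filter, mem_permWords] at hτ
  obtain ⟨hτ, -, hocc⟩ := hτ
  rw [sum_pow_occ_infix u k c.succ_pos (append_singleton_perm_range hτ) hfar
      fun x y => blockAdj_far_append_singleton_iff hc0 hτ,
    occ_append_singleton hc0 hτ, hocc, zero_add, pow_one, Nat.add_assoc, Nat.add_sub_cancel_left,
    Nat.add_comm 1]

lemma isLeast_isOcc_of_avoider (hσ : σ ∈ permWords n) (hc : 2 ≤ c) (hτ : τ ∈ avoiders c)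
    (h : τ ++ [c] <:+: σ) : IsLeast {b | IsOcc σ b} c := by
  rw [avoiders, Finset.mem_filter, mem_permWords] at hτ
  exact isLeast_isOcc (by omega) ((mem_permWords.1 hσ).nodup_iff.2 List.nodup_range) hτ.1 hτ.2.2 h

lemma filter_occ_ne_zero_eq_biUnion (n : ℕ) :
    {σ ∈ permWords n | σ.IsChain Far ∧ occ σ ≠ 0} =
      ((Finset.Ico 2 n).sigma avoiders).biUnion fun p =>
        {σ ∈ permWords n | σ.IsChain Far ∧ p.2 ++ [p.1] <:+: σ} := by
  ext σ
  simp only [Finset.mem_filter, Finset.mem_biUnion, Finset.mem_sigma, Sigma.exists]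
  constructor
  · rintro ⟨hσ, hfar, hocc⟩
    obtain ⟨c, hc, τ, hτ, h⟩ := exists_avoider_infix (mem_permWords.1 hσ) hfar hocc
    exact ⟨c, τ, ⟨hc, hτ⟩, hσ, hfar, h⟩
  · rintro ⟨c, τ, ⟨hc, hτ⟩, hσ, hfar, h⟩
    rw [Finset.mem_Ico] at hc
    refine ⟨hσ, hfar, fun h0 => occ_eq_zero_iff.1 h0 c ?_
      (isLeast_isOcc_of_avoider hσ hc.1 hτ h).1⟩
    rw [length_of_perm_range (mem_permWords.1 hσ)]
    exact hc.2

lemma pairwiseDisjoint_avoider_infix (n : ℕ) :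
    ((Finset.Ico 2 n).sigma avoiders : Set (Σ _ : ℕ, List ℕ)).PairwiseDisjoint fun p =>
        {σ ∈ permWords n | σ.IsChain Far ∧ p.2 ++ [p.1] <:+: σ} := by
  rintro ⟨c, τ⟩ hp ⟨c', τ'⟩ hp' hne
  simp only [Finset.mem_coe, Finset.mem_sigma, Finset.mem_Ico] at hp hp'
  refine Finset.disjoint_left.2 fun σ hσ hσ' => hne ?_
  simp only [Finset.mem_filter] at hσ hσ'
  obtain rfl : c = c' := (isLeast_isOcc_of_avoider hσ.1 hp.1.1 hp.2 hσ.2.2).unique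
    (isLeast_isOcc_of_avoider hσ.1 hp'.1.1 hp'.2 hσ'.2.2)
  have hfilter : ∀ ρ ∈ avoiders c, ρ ++ [c] <:+: σ → σ.filter (· < c + 1) = ρ ++ [c] :=
    fun ρ hρ h => filter_lt_eq_of_infix ((mem_permWords.1 hσ.1).nodup_iff.2 List.nodup_range)
      (append_singleton_perm_range (mem_permWords.1 (Finset.mem_filter.1 hρ).1)) h
  obtain rfl : τ = τ' := List.append_left_injective [c]
    ((hfilter τ hp.2 hσ.2.2).symm.trans (hfilter τ' hp'.2 hσ'.2.2))
  rfl

lemma chainWeight_far (n : ℕ) :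
    chainWeight u Far n = chainWeight 0 Far n +
      u * ∑ c ∈ Finset.Ico 2 n, chainWeight 0 Far c * chainWeight u (FarExcept 1 0) (n - c) := by
  have havoid : ∑ σ ∈ permWords n with σ.IsChain Far ∧ occ σ = 0, u ^ occ σ =
      chainWeight 0 Far n := by
    rw [chainWeight_zero_left, avoiders, Finset.card_eq_sum_ones, Nat.cast_sum, Nat.cast_one]
    refine Finset.sum_congr rfl fun σ hσ => ?_
    rw [(Finset.mem_filter.1 hσ).2.2, pow_zero]
  have hlowest : ∑ σ ∈ permWords n with σ.IsChain Far ∧ occ σ ≠ 0, u ^ occ σ =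
      ∑ c ∈ Finset.Ico 2 n, ∑ _τ ∈ avoiders c, u * chainWeight u (FarExcept 1 0) (n - c) := by
    rw [filter_occ_ne_zero_eq_biUnion, Finset.sum_biUnion (pairwiseDisjoint_avoider_infix n),
      Finset.sum_sigma]
    exact Finset.sum_congr rfl fun c hc => Finset.sum_congr rfl fun _ hτ =>
      sum_pow_occ_avoider_infix u hc hτ
  rw [chainWeight, ← Finset.sum_filter_add_sum_filter_not _ (occ · = 0), Finset.filter_filter,
    Finset.filter_filter, havoid, hlowest, Finset.mul_sum]
  refine congrArg _ (Finset.sum_congr rfl fun c _ => ?_)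
  rw [Finset.sum_const, nsmul_eq_mul, chainWeight_zero_left, mul_left_comm]

end LowestOccurrence

section OneLine

variable {α : Type*} {n b : ℕ} {l : List ℕ} {σ : Equiv.Perm (Fin n)}

lemma filter_append_append {p : α → Bool} {A F C : List α} (hA : ∀ x ∈ A, ¬p x)
    (hF : ∀ x ∈ F, p x) (hC : ∀ x ∈ C, ¬p x) : (A ++ F ++ C).filter p = F := by
  rw [List.filter_append, List.filter_append, List.filter_eq_nil_iff.2 hA,
    List.filter_eq_self.2 hF, List.filter_eq_nil_iff.2 hC, List.nil_append, List.append_nil]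

lemma filter_isInfix_iff (p : α → Bool) {l : List α} :
    l.filter p <:+: l ↔ ∃ A F C, A ++ F ++ C = l ∧
      (∀ x ∈ A, ¬p x) ∧ (∀ x ∈ F, p x) ∧ ∀ x ∈ C, ¬p x := by
  constructor
  · rintro ⟨A, C, h⟩
    have hF : ∀ x ∈ l.filter p, p x := fun x hx => (List.mem_filter.1 hx).2
    have hlength := congrArg (List.length <| List.filter p ·) h
    simp only [List.filter_append, List.filter_eq_self.2 hF, List.length_append] at hlength
    refine ⟨A, l.filter p, C, h, ?_, hF, ?_⟩ <;>
      rw [← List.filter_eq_nil_iff, ← List.length_eq_zero_iff] <;> omega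
  · rintro ⟨A, F, C, rfl, hA, hF, hC⟩
    rw [filter_append_append hA hF hC]
    exact ⟨A, C, rfl⟩

lemma isOcc_iff_exists_append (hl : l.Perm (List.range n)) :
    IsOcc l b ↔ ∃ A F C, A ++ F ++ b :: C = l ∧ F ≠ [] ∧
      (∀ x ∈ A, b < x) ∧ (∀ x ∈ F, x < b) ∧ ∀ x ∈ C, b < x := by
  constructor
  · rintro ⟨hb, hinf, hlast⟩
    obtain ⟨A, F, C, rfl, hA, hF, hC⟩ := (filter_isInfix_iff _).1 hinf
    have h0 : 0 ∈ (A ++ F ++ C).filter (· ≤ b) := by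
      have hbn := (mem_of_perm_range hl).1
        (List.mem_of_mem_filter (hlast.subset (List.mem_singleton_self b)))
      exact List.mem_filter.2 ⟨(mem_of_perm_range hl).2 (by omega), by simp⟩
    rw [filter_append_append hA hF hC] at hlast h0
    obtain ⟨F, rfl⟩ := hlast
    simp only [decide_eq_true_eq, not_le] at hA hF hC
    have h0F : 0 ∈ F := (List.mem_append.1 h0).resolve_right (by simpa using hb.ne)
    have hnodup : (F ++ [b]).Nodup :=
      (List.infix_append A (F ++ [b]) C).sublist.nodup (hl.nodup_iff.2 List.nodup_range)
    have hbF : b ∉ F := fun hbF => (List.nodup_append'.1 hnodup).2.2 hbF (List.mem_singleton_self b)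
    refine ⟨A, F, C, by simp, List.ne_nil_of_mem h0F, hA, fun x hx => ?_, hC⟩
    exact lt_of_le_of_ne (hF x (List.mem_append_left _ hx)) (ne_of_mem_of_not_mem hx hbF)
  · rintro ⟨A, F, C, rfl, hne, hA, hF, hC⟩
    obtain ⟨x, hx⟩ := List.exists_mem_of_ne_nil F hne
    have hfilter : (A ++ (F ++ [b]) ++ C).filter (· ≤ b) = F ++ [b] :=
      filter_append_append (by simpa using hA) (by simpa [or_imp, forall_and] using
        fun x hx => (hF x hx).le) (by simpa using hC)
    have happend : A ++ F ++ b :: C = A ++ (F ++ [b]) ++ C := by simp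
    rw [IsOcc, happend, hfilter]
    exact ⟨(Nat.zero_le x).trans_lt (hF x hx), ⟨A, C, rfl⟩, List.suffix_append F [b]⟩

lemma exists_append_append_cons_iff {l : List α} {b : α} (p : List α → List α → List α → Prop) :
    (∃ A F C, A ++ F ++ b :: C = l ∧ F ≠ [] ∧ p A F C) ↔
      ∃ i j, i < j ∧ l[j]? = some b ∧ p (l.take i) ((l.take j).drop i) (l.drop (j + 1)) := by
  constructor
  · rintro ⟨A, F, C, rfl, hne, h⟩
    refine ⟨A.length, (A ++ F).length, by simpa [List.length_pos_iff], by simp, ?_⟩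
    have htake : (A ++ F ++ b :: C).take A.length = A := by simp
    rwa [htake, List.take_left, List.drop_left, List.drop_length_add_append]
  · rintro ⟨i, j, hij, hb, h⟩
    obtain ⟨hj, hb⟩ := List.getElem?_eq_some_iff.1 hb
    refine ⟨_, _, _, ?_, ?_, h⟩
    · have htake : l.take i = (l.take j).take i := by rw [List.take_take, min_eq_left hij.le]
      rw [htake, List.take_append_drop, ← hb, ← List.drop_eq_getElem_cons, List.take_append_drop]
    · rw [← List.length_pos_iff]
      simp only [List.length_drop, List.length_take]
      omega

/-- The one-line notation of `σ`. -/
def toWord (σ : Equiv.Perm (Fin n)) : List ℕ := List.ofFn fun i => (σ i : ℕ)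

lemma toWord_perm_range (σ : Equiv.Perm (Fin n)) : (toWord σ).Perm (List.range n) := by
  rw [← List.map_coe_finRange_eq_range, ← List.ofFn_id, List.map_ofFn]
  exact σ.ofFn_comp_perm _

lemma toWord_injective : Function.Injective (toWord (n := n)) := fun _ _ h =>
  Equiv.ext fun i => Fin.ext (congrFun (List.ofFn_injective h) i)

lemma image_toWord_univ (n : ℕ) :
    Finset.univ.image (toWord (n := n)) = permWords n := by
  refine Finset.eq_of_subset_of_card_le (Finset.image_subset_iff.2 fun σ _ =>
    mem_permWords.2 (toWord_perm_range σ)) ?_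
  rw [Finset.card_image_of_injective _ toWord_injective, Finset.card_univ, Fintype.card_perm,
    Fintype.card_fin, permWords]
  exact (List.toFinset_card_le _).trans (by rw [List.length_permutations, List.length_range])

lemma isKing_iff_isChain_far : IsKing σ ↔ (toWord σ).IsChain Far := by
  have hfar (x y : ℕ) : 1 < |(y : ℤ) - x| ↔ Far x y := by
    rw [lt_abs, Far]
    omega
  simp only [IsKing, hfar]
  rw [toWord, List.isChain_ofFn]
  exact ⟨fun h i hi => h ⟨i, Nat.lt_of_succ_lt hi⟩ hi, fun h i hi => h i hi⟩

lemma forall_mem_drop_take_toWord (p : ℕ → Prop) (i j : ℕ) :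
    (∀ x ∈ ((toWord σ).take j).drop i, p x) ↔ ∀ k : Fin n, i ≤ k → k < j → p (σ k) := by
  simp only [List.mem_drop_iff_getElem, List.getElem_take, toWord, List.getElem_ofFn,
    List.length_take, List.length_ofFn, forall_exists_index]
  constructor
  · rintro h ⟨k, hk⟩ hik hkj
    obtain ⟨d, rfl⟩ := Nat.exists_eq_add_of_le hik
    exact h _ d (by dsimp only at hkj; omega) rfl
  · rintro h _ d hd rfl
    exact h _ (by simp) (by simp; omega)

lemma forall_mem_take_toWord (p : ℕ → Prop) (i : ℕ) :
    (∀ x ∈ (toWord σ).take i, p x) ↔ ∀ k : Fin n, k < i → p (σ k) := by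
  simpa using forall_mem_drop_take_toWord p 0 i

lemma forall_mem_drop_toWord (p : ℕ → Prop) (i : ℕ) :
    (∀ x ∈ (toWord σ).drop i, p x) ↔ ∀ k : Fin n, i ≤ k → p (σ k) := by
  have h := forall_mem_drop_take_toWord (σ := σ) p i n
  simpa [List.take_of_length_le, toWord] using h

lemma isOcc_toWord_iff : IsOcc (toWord σ) b ↔ ∃ i j, OccP σ i j ∧ (σ j : ℕ) = b := by
  rw [isOcc_iff_exists_append (toWord_perm_range σ), exists_append_append_cons_iff]
  simp only [forall_mem_take_toWord, forall_mem_drop_take_toWord, forall_mem_drop_toWord]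
  constructor
  · rintro ⟨i, j, hij, hj, hA, hF, hC⟩
    obtain ⟨hjn, rfl⟩ : ∃ hj : j < n, (σ ⟨j, hj⟩ : ℕ) = b := by
      simpa [toWord, List.getElem?_eq_some_iff] using hj
    exact ⟨⟨i, hij.trans hjn⟩, ⟨j, hjn⟩,
      ⟨hij, hF _ le_rfl hij, hA, fun k hk => hF k hk.le, hC⟩, rfl⟩
  · rintro ⟨i, j, ⟨hij, hlt, hA, hF, hC⟩, rfl⟩
    refine ⟨i, j, hij, by simp [toWord], hA, fun k hik hkj => ?_, hC⟩
    rcases hik.eq_or_lt with hik | hik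
    · rwa [← Fin.ext hik]
    · exact hF k hik hkj

lemma eq_of_occP {i i' j : Fin n} (h : OccP σ i j) (h' : OccP σ i' j) : i = i' :=
  le_antisymm (not_lt.1 fun hlt => (h.2.2.1 i' hlt).asymm h'.2.1)
    (not_lt.1 fun hlt => (h'.2.2.1 i hlt).asymm h.2.1)

lemma occP_eq_occ_toWord (σ : Equiv.Perm (Fin n)) : occP σ = occ (toWord σ) := by
  rw [occP, occ, Nat.count_eq_card_filter_range, ← Nat.card_eq_finsetCard]
  have hmem {b : ℕ} : b ∈ (Finset.range (toWord σ).length).filter (IsOcc (toWord σ)) ↔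
      b < n ∧ IsOcc (toWord σ) b := by
    rw [Finset.mem_filter, Finset.mem_range, length_of_perm_range (toWord_perm_range σ)]
  refine Nat.card_eq_of_bijective (fun p =>
    ⟨σ p.1.2, hmem.2 ⟨(σ p.1.2).2, isOcc_toWord_iff.2 ⟨p.1.1, p.1.2, p.2, rfl⟩⟩⟩) ⟨?_, ?_⟩
  · rintro ⟨⟨i, j⟩, h⟩ ⟨⟨i', j'⟩, h'⟩ heq
    obtain rfl : j = j' := σ.injective (Fin.ext (Subtype.ext_iff.1 heq))
    obtain rfl : i = i' := eq_of_occP h h'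
    rfl
  · rintro ⟨b, hb⟩
    obtain ⟨i, j, h, rfl⟩ := isOcc_toWord_iff.1 (hmem.1 hb).2
    exact ⟨⟨(i, j), h⟩, rfl⟩

open Classical in
lemma chainWeight_far_eq_sum_perm {R : Type*} [CommSemiring R] (u : R) (n : ℕ) :
    chainWeight u Far n =
      ∑ σ : Equiv.Perm (Fin n), if IsKing σ then u ^ occP σ else 0 := by
  rw [chainWeight, Finset.sum_filter, ← image_toWord_univ,
    Finset.sum_image toWord_injective.injOn]
  simp only [isKing_iff_isChain_far, occP_eq_occ_toWord]

end OneLine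

section Series

open PowerSeries

variable {R : Type*} [CommRing R] (u : R)

/-- The generating function of `chainWeight u Q`. -/
def chainSeries (Q : ℕ → ℕ → Prop) [DecidableRel Q] : R⟦X⟧ := mk fun n => chainWeight u Q n

lemma chainSeries_farExcept_one_zero :
    chainSeries u (FarExcept 1 0) =
      chainSeries u Far + X * (chainSeries u (FarExcept 0 1) - 1) := by
  ext n
  rcases n with _ | _ | n
  · simp [chainSeries, chainWeight_zero]
  · simp [chainSeries, chainWeight_zero, chainWeight_one, coeff_succ_X_mul]
  · simp [chainSeries, coeff_succ_X_mul, coeff_one, chainWeight_farExcept_one_zero]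

lemma chainSeries_farExcept_zero_one :
    chainSeries u (FarExcept 0 1) =
      chainSeries u Far + C u * X * (chainSeries u (FarExcept 1 0) - 1) := by
  ext n
  rw [mul_assoc]
  rcases n with _ | _ | n
  · simp [chainSeries, chainWeight_zero]
  · simp [chainSeries, chainWeight_zero, chainWeight_one, coeff_succ_X_mul]
  · simp [chainSeries, coeff_succ_X_mul, coeff_one, chainWeight_farExcept_zero_one]

lemma coeff_chainSeries_sub_one (Q : ℕ → ℕ → Prop) [DecidableRel Q] (n : ℕ) :
    coeff n (chainSeries u Q - 1) = if n = 0 then 0 else chainWeight u Q n := by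
  rw [map_sub, coeff_one, chainSeries, coeff_mk]
  split_ifs with hn
  · rw [hn, chainWeight_zero, sub_self]
  · rw [sub_zero]

lemma coeff_chainSeries_sub_one_sub_X (Q : ℕ → ℕ → Prop) [DecidableRel Q] (n : ℕ) :
    coeff n (chainSeries u Q - 1 - X) = if 2 ≤ n then chainWeight u Q n else 0 := by
  rw [map_sub, coeff_chainSeries_sub_one, coeff_X]
  rcases n with _ | _ | n <;> simp [chainWeight_one]

lemma chainSeries_far :
    chainSeries u Far = chainSeries 0 Far +
      C u * ((chainSeries 0 Far - 1 - X) * (chainSeries u (FarExcept 1 0) - 1)) := by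
  ext n
  rw [map_add, coeff_C_mul, coeff_mul, Finset.Nat.sum_antidiagonal_eq_sum_range_succ_mk]
  simp only [coeff_chainSeries_sub_one_sub_X, coeff_chainSeries_sub_one]
  rw [chainSeries, coeff_mk, chainSeries, coeff_mk, chainWeight_far]
  congr 2
  refine Finset.sum_subset_zero_on_sdiff ?_ ?_ ?_
  · intro c hc
    simp only [Finset.mem_Ico, Finset.mem_range] at hc ⊢
    omega
  · intro c hc
    simp only [Finset.mem_sdiff, Finset.mem_Ico, Finset.mem_range] at hc
    split_ifs <;> first | omega | simp
  · intro c hc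
    rw [Finset.mem_Ico] at hc
    rw [if_pos hc.1, if_neg (by omega)]

lemma one_sub_mul_chainSeries_farExcept :
    (1 - C u * X ^ 2) * (chainSeries u (FarExcept 1 0) - 1) =
      (1 + X) * (chainSeries u Far - 1) := by
  linear_combination chainSeries_farExcept_one_zero u + X * chainSeries_farExcept_zero_one u

lemma one_sub_mul_chainSeries_far_sub :
    (1 - C u * X ^ 2) * (chainSeries u Far - chainSeries 0 Far) =
      C u * (1 + X) * (chainSeries 0 Far - 1 - X) * (chainSeries u Far - 1) := by
  linear_combination (1 - C u * X ^ 2) * chainSeries_far u +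
    C u * (chainSeries 0 Far - 1 - X) * one_sub_mul_chainSeries_farExcept u

lemma isUnit_one_add_X : IsUnit (1 + X : R⟦X⟧) := by
  simp [isUnit_iff_constantCoeff]

lemma chainSeries_one_sub_X_mul_chainSeries_zero :
    (chainSeries (1 : R) Far - X) * chainSeries 0 Far = 2 * chainSeries 1 Far - X - 1 := by
  have h := one_sub_mul_chainSeries_far_sub (1 : R)
  rw [map_one] at h
  refine isUnit_one_add_X.mul_left_cancel ?_
  linear_combination -h

open Classical in
/-- The generating function of king permutations weighted by `u ^ occP σ`, for a scalar `u` of an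
arbitrary commutative ring; `Etu` is the case `u = Polynomial.X`. -/
noncomputable def kingSeries : R⟦X⟧ := mk fun n =>
  ∑ σ : Equiv.Perm (Fin n), if IsKing σ then u ^ occP σ else 0

lemma kingSeries_eq_chainSeries_far : kingSeries u = chainSeries u Far := by
  simp only [kingSeries, chainSeries, chainWeight_far_eq_sum_perm]

lemma natCast_card_subtype {α : Type*} [Fintype α] (p : α → Prop) [DecidablePred p] :
    (Nat.card {a // p a} : R) = ∑ a, if p a then 1 else 0 := by
  rw [Nat.card_eq_fintype_card, Fintype.card_subtype, Finset.natCast_card_filter]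

open Classical in
lemma kingSeries_one : kingSeries (1 : R) = mk fun n => (kingCount n : R) := by
  simp only [kingSeries, kingCount, natCast_card_subtype, one_pow]

open Classical in
lemma kingSeries_zero : kingSeries (0 : R) =
    mk fun n => (Nat.card {σ : Equiv.Perm (Fin n) // IsKing σ ∧ occP σ = 0} : R) := by
  simp only [kingSeries, natCast_card_subtype, zero_pow_eq, ite_and]

end Series

end KingWord

open PowerSeries in
theorem statement_18_general {R : Type*} [CommRing R] (u : R) :
    (C u - X * (1 - C u + C u * X) + (1 - C u) * mk fun n => (kingCount n : R)) *
        KingWord.kingSeries u =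
      (2 - C u - C u * X ^ 2) * (mk fun n => (kingCount n : R)) - (1 - C u) * (1 + X) := by
  rw [← KingWord.kingSeries_one, KingWord.kingSeries_eq_chainSeries_far,
    KingWord.kingSeries_eq_chainSeries_far]
  linear_combination (KingWord.chainSeries 1 KingWord.Far - X) *
      KingWord.one_sub_mul_chainSeries_far_sub u +
    (1 - C u * X ^ 2 + C u * (1 + X) * (KingWord.chainSeries u KingWord.Far - 1)) *
      KingWord.chainSeries_one_sub_X_mul_chainSeries_zero (R := R)

theorem statement_18 :
    (U - T * (1 - U + U * T) + (1 - U) * kingAu) * Etu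
      = (2 - U - U * T ^ 2) * kingAu - (1 - U) * (1 + T) ∧
    (kingA - PowerSeries.X) * Pav = 2 * kingA - PowerSeries.X - 1 := by
  refine ⟨statement_18_general Polynomial.X, ?_⟩
  have h := statement_18_general (0 : ℚ)
  rw [map_zero, KingWord.kingSeries_zero] at h
  rw [kingA, Pav]
  linear_combination h
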